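/- For all δ > 0 there is a constant C = C(δ) > 0 such that the following holds. For all ε > 0, A > 0, all p with 1/2 + δ ≤ p ≤ 1, all n ∈ ℕ and all f : {0,1}^n → {0,1}: if E_x[s_f(x)^p] ≤ A, then f is ε-close to a J-junta, where J = 2^{C·(A/ε)^{1/p}}. -/

import Mathlib

open Finset

noncomputable section

/-- Expectation over the uniform distribution on `{0,1}^n`. -/
def hcExp (n : ℕ) (g : (Fin n → Bool) → ℝ) : ℝ :=
  (∑ x : Fin n → Bool, g x) / 2 ^ n

/-- Flip the `i`-th coordinate of `x`. -/
def hcFlip {n : ℕ} (x : Fin n → Bool) (i : Fin n) : Fin n → Bool :=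
  Function.update x i (!(x i))

/-- Sensitivity of `f` at `x`. -/
def sens {n : ℕ} (f : (Fin n → Bool) → Bool) (x : Fin n → Bool) : ℕ :=
  (Finset.univ.filter fun i => f (hcFlip x i) ≠ f x).card

/-- `f` with values in `{0,1} ⊆ ℝ`. -/
def toReal {n : ℕ} (f : (Fin n → Bool) → Bool) : (Fin n → Bool) → ℝ :=
  fun x => if f x then 1 else 0

/-- Variance of a Boolean function. -/
def hcVar (n : ℕ) (f : (Fin n → Bool) → Bool) : ℝ :=
  hcExp n (toReal f) - (hcExp n (toReal f)) ^ 2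

/-- Influence of coordinate `i`. -/
def influence (n : ℕ) (f : (Fin n → Bool) → Bool) (i : Fin n) : ℝ :=
  hcExp n (fun x => if f (hcFlip x i) = f x then 0 else 1)

/-- Fourier character. -/
def chi {n : ℕ} (S : Finset (Fin n)) (x : Fin n → Bool) : ℝ :=
  ∏ i ∈ S, (if x i then (-1 : ℝ) else 1)

/-- Fourier coefficient of `g` at `S`. -/
def fcoef (n : ℕ) (g : (Fin n → Bool) → ℝ) (S : Finset (Fin n)) : ℝ :=
  hcExp n (fun x => g x * chi S x)

/-- Derivative of `g` along coordinate `i`. -/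
def derivOn {n : ℕ} (g : (Fin n → Bool) → ℝ) (i : Fin n) (x : Fin n → Bool) : ℝ :=
  g (Function.update x i false) - g (Function.update x i true)

/-- Euclidean norm of the gradient of `g` at `x`. -/
def gradNorm2 {n : ℕ} (g : (Fin n → Bool) → ℝ) (x : Fin n → Bool) : ℝ :=
  Real.sqrt (∑ i, (derivOn g i x) ^ 2)

/-- `ℓ_p` norm of the gradient of `g` at `x`. -/
def gradNormP {n : ℕ} (p : ℝ) (g : (Fin n → Bool) → ℝ) (x : Fin n → Bool) : ℝ :=
  (∑ i, |derivOn g i x| ^ p) ^ (1 / p)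

/-- Fourier weight at exactly level `d`. -/
def wEq (n : ℕ) (g : (Fin n → Bool) → ℝ) (d : ℕ) : ℝ :=
  ∑ S ∈ Finset.univ.filter (fun S : Finset (Fin n) => S.card = d), (fcoef n g S) ^ 2

/-- Approximate level-`d` Fourier weight: levels in `[d, 2d)`. -/
def wApprox (n : ℕ) (g : (Fin n → Bool) → ℝ) (d : ℕ) : ℝ :=
  ∑ S ∈ Finset.univ.filter (fun S : Finset (Fin n) => d ≤ S.card ∧ S.card < 2 * d),
    (fcoef n g S) ^ 2

/-- Fourier weight at levels `≥ d`. -/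
def wGe (n : ℕ) (g : (Fin n → Bool) → ℝ) (d : ℕ) : ℝ :=
  ∑ S ∈ Finset.univ.filter (fun S : Finset (Fin n) => d ≤ S.card), (fcoef n g S) ^ 2


/-- `g` is a `j`-junta: it depends only on some set of at most `j` coordinates. -/
def isJunta {n : ℕ} (j : ℕ) (g : (Fin n → Bool) → Bool) : Prop :=
  ∃ J : Finset (Fin n), J.card ≤ j ∧
    ∀ x y : Fin n → Bool, (∀ i ∈ J, x i = y i) → g x = g y

/-- `f` is `ε`-close to a `j`-junta. -/
def closeToJunta {n : ℕ} (ε : ℝ) (j : ℕ) (f : (Fin n → Bool) → Bool) : Prop :=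
  ∃ g : (Fin n → Bool) → Bool, isJunta j g ∧
    hcExp n (fun x => if f x = g x then 0 else 1) ≤ ε

/-!
Write `A` for a bound on `𝔼 s_f ^ p`. It suffices to find a small set `J` of coordinates such that
the Fourier weight of `f` on the sets `S ⊈ J` is at most `ε / 4`: rounding the part of the Fourier
expansion supported on subsets of `J` then gives a junta `ε`-close to `f`.

*High levels.* Let `J` contain each coordinate independently with probability `a`. Fixing the
coordinates outside `J` gives a restriction whose level-one coefficients have square sum at most
`1`, so pairing them with the derivatives `∂ᵢ f`, `i ∈ J`, bounds the weight on the sets `S` with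
`#(J ∩ S) = 1` by half the mean norm of the gradient along `J`, which at `x` is the square root of
the number of sensitive coordinates in `J`. Averaging over `J`, using `√k ≤ k ^ p` and the concavity
of `t ↦ t ^ p`, the right side becomes at most `a ^ p A / 2`. Dividing by `a` and integrating over
`0 < a < 1 / D` turns the left side into `1 - (1 - 1 / D) ^ #S`, which is at least `1 / 2` for
`D ≤ #S`, so the weight at levels `≥ D` is `O(A / D ^ p)`. Hence only levels up to
`d ≈ (16 A / ε) ^ (1 / p)` matter.

*Low levels.* By duality, Bonami's lemma bounds the degree-`d` weight of a vector-valued function by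
`3 ^ (m d)` times its squared `L^q` norm, where `q` is the exponent conjugate to `2 ^ (m + 1)`,
which tends to `1` as `m` grows. Split the gradient of `f` according to whether the sensitivity is
below a threshold `M = exp(O(d))`. Where it is at least `M`, the `q`-th moment of the gradient is at
most `M ^ (q / 2 - p) A`, a gain once `q < 1 + δ` and hence `q / 2 < p`. Where it is below `M`, the
influences sum to at most `M A`, so all but `exp(O(d))` coordinates have influence below a cutoff
`exp(-O(d))`, and the level inequality applied to each of them separately gains the square root of
that cutoff. `J` consists of the exceptional coordinates.
-/

open scoped BigOperators symmDiff

section Expectation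

variable {n : ℕ} {g h : (Fin n → Bool) → ℝ}

lemma hcExp_eq_expect (g : (Fin n → Bool) → ℝ) : hcExp n g = 𝔼 x, g x := by
  simp [hcExp, Fintype.expect_eq_sum_div_card]

lemma hcExp_add (g h : (Fin n → Bool) → ℝ) :
    hcExp n (fun x => g x + h x) = hcExp n g + hcExp n h := by
  simp only [hcExp_eq_expect, expect_add_distrib]

lemma hcExp_sub (g h : (Fin n → Bool) → ℝ) :
    hcExp n (fun x => g x - h x) = hcExp n g - hcExp n h := by
  simp only [hcExp_eq_expect, expect_sub_distrib]

lemma hcExp_const_mul (c : ℝ) (g : (Fin n → Bool) → ℝ) :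
    hcExp n (fun x => c * g x) = c * hcExp n g := by
  simp only [hcExp_eq_expect, mul_expect]

lemma hcExp_sum {ι : Type*} (s : Finset ι) (g : ι → (Fin n → Bool) → ℝ) :
    hcExp n (fun x => ∑ i ∈ s, g i x) = ∑ i ∈ s, hcExp n (g i) := by
  simp only [hcExp_eq_expect, expect_sum_comm]

lemma hcExp_const (n : ℕ) (c : ℝ) : hcExp n (fun _ => c) = c := by
  simp [hcExp_eq_expect]

lemma hcExp_mono (hgh : ∀ x, g x ≤ h x) : hcExp n g ≤ hcExp n h := by
  simpa only [hcExp_eq_expect] using expect_le_expect fun x _ => hgh x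

lemma hcExp_nonneg (hg : ∀ x, 0 ≤ g x) : 0 ≤ hcExp n g := by
  simpa only [hcExp_eq_expect] using expect_nonneg fun x _ => hg x

lemma hcFlip_hcFlip (x : Fin n → Bool) (i : Fin n) : hcFlip (hcFlip x i) i = x := by
  simp [hcFlip]

lemma hcExp_comp_hcFlip (g : (Fin n → Bool) → ℝ) (i : Fin n) :
    hcExp n (fun x => g (hcFlip x i)) = hcExp n g := by
  have hinv : Function.Involutive fun x : Fin n → Bool => hcFlip x i :=
    fun x => hcFlip_hcFlip x i
  simpa only [hcExp_eq_expect] using Fintype.expect_bijective _ hinv.bijective _ _ fun _ => rfl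

lemma hcExp_eq_zero_of_hcFlip_eq_neg (i : Fin n) (hg : ∀ x, g (hcFlip x i) = -g x) :
    hcExp n g = 0 := by
  have hneg : hcExp n g = -1 * hcExp n g := by
    conv_lhs => rw [← hcExp_comp_hcFlip g i]
    rw [← hcExp_const_mul]
    simp only [hg, neg_one_mul]
  linarith

lemma sq_hcExp_mul_le (g h : (Fin n → Bool) → ℝ) :
    hcExp n (fun x => g x * h x) ^ 2 ≤
      hcExp n (fun x => g x ^ 2) * hcExp n (fun x => h x ^ 2) := by
  simpa only [hcExp_eq_expect] using expect_mul_sq_le_sq_mul_sq univ g h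

lemma hcExp_sq_mul_sq_le_of_fourth_moments {a b : ℝ} (ha : 0 ≤ a) (hb : 0 ≤ b)
    (hg : hcExp n (fun x => g x ^ 4) ≤ a ^ 2) (hh : hcExp n (fun x => h x ^ 4) ≤ b ^ 2) :
    hcExp n (fun x => g x ^ 2 * h x ^ 2) ≤ a * b := by
  refine le_of_sq_le_sq ?_ (mul_nonneg ha hb)
  calc hcExp n (fun x => g x ^ 2 * h x ^ 2) ^ 2
      ≤ hcExp n (fun x => (g x ^ 2) ^ 2) * hcExp n (fun x => (h x ^ 2) ^ 2) :=
        sq_hcExp_mul_le _ _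
    _ = hcExp n (fun x => g x ^ 4) * hcExp n (fun x => h x ^ 4) := by simp only [← pow_mul]
    _ ≤ a ^ 2 * b ^ 2 :=
        mul_le_mul hg hh (hcExp_nonneg fun x => by positivity) (sq_nonneg a)
    _ = (a * b) ^ 2 := (mul_pow a b 2).symm

lemma hcExp_mul_le_Lp_mul_Lq {p q : ℝ} (hpq : p.HolderConjugate q)
    (hg : ∀ x, 0 ≤ g x) (hh : ∀ x, 0 ≤ h x) :
    hcExp n (fun x => g x * h x) ≤
      hcExp n (fun x => g x ^ p) ^ (1 / p) * hcExp n (fun x => h x ^ q) ^ (1 / q) := by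
  have hgp : 0 ≤ ∑ x, g x ^ p := sum_nonneg fun x _ => Real.rpow_nonneg (hg x) p
  have hhq : 0 ≤ ∑ x, h x ^ q := sum_nonneg fun x _ => Real.rpow_nonneg (hh x) q
  have hexp : 1 / p + 1 / q = 1 := by simpa using hpq.inv_add_inv_eq_one
  unfold hcExp
  rw [Real.div_rpow hgp (by positivity), Real.div_rpow hhq (by positivity), div_mul_div_comm,
    ← Real.rpow_add (by positivity), hexp, Real.rpow_one]
  gcongr
  exact Real.inner_le_Lp_mul_Lq_of_nonneg univ hpq (fun x _ => hg x) (fun x _ => hh x)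

end Expectation

section Fourier

variable {n : ℕ}

lemma chi_eq_prod_univ (S : Finset (Fin n)) (x : Fin n → Bool) :
    chi S x = ∏ i, if i ∈ S then (if x i then (-1 : ℝ) else 1) else 1 := by
  simp [chi, prod_ite_mem]

lemma chi_mul_chi (S T : Finset (Fin n)) (x : Fin n → Bool) :
    chi S x * chi T x = chi (S ∆ T) x := by
  simp only [chi_eq_prod_univ, ← prod_mul_distrib]
  refine prod_congr rfl fun i _ => ?_
  by_cases hS : i ∈ S <;> by_cases hT : i ∈ T <;> cases hx : x i <;>
    simp [mem_symmDiff, hS, hT]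

lemma chi_empty (x : Fin n → Bool) : chi ∅ x = 1 := rfl

lemma chi_insert {i : Fin n} {S : Finset (Fin n)} (hi : i ∉ S) (x : Fin n → Bool) :
    chi (insert i S) x = chi {i} x * chi S x := by
  simp [chi, prod_insert hi]

lemma chi_sq (S : Finset (Fin n)) (x : Fin n → Bool) : chi S x ^ 2 = 1 := by
  rw [sq, chi_mul_chi, symmDiff_self, bot_eq_empty, chi_empty]

lemma chi_hcFlip (S : Finset (Fin n)) (x : Fin n → Bool) (i : Fin n) :
    chi S (hcFlip x i) = if i ∈ S then -chi S x else chi S x := by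
  have hflip (T : Finset (Fin n)) (hi : i ∉ T) : chi T (hcFlip x i) = chi T x :=
    prod_congr rfl fun j hj => by
      rw [hcFlip, Function.update_of_ne (ne_of_mem_of_not_mem hj hi)]
  split_ifs with hi
  · rw [← insert_erase hi, chi_insert (notMem_erase i S), chi_insert (notMem_erase i S),
      hflip _ (notMem_erase i S)]
    cases hx : x i <;> simp [chi, hcFlip, hx]
  · exact hflip S hi

lemma hcExp_chi (S : Finset (Fin n)) : hcExp n (chi S) = if S = ∅ then 1 else 0 := by
  split_ifs with hS
  · simp only [hS, funext chi_empty, hcExp_const]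
  · obtain ⟨i, hi⟩ := nonempty_iff_ne_empty.2 hS
    exact hcExp_eq_zero_of_hcFlip_eq_neg i fun x => by rw [chi_hcFlip, if_pos hi]

lemma sum_chi_mul_chi (x y : Fin n → Bool) :
    ∑ S : Finset (Fin n), chi S x * chi S y = if x = y then 2 ^ n else 0 := by
  have hprod (S : Finset (Fin n)) :
      chi S x * chi S y = ∏ i ∈ S, if x i = y i then (1 : ℝ) else -1 := by
    rw [chi, chi, ← prod_mul_distrib]
    refine prod_congr rfl fun i _ => ?_
    cases hx : x i <;> cases hy : y i <;> simp
  rw [sum_congr rfl fun S _ => hprod S, ← powerset_univ, ← prod_one_add]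
  split_ifs with hxy
  · norm_num [hxy]
  · obtain ⟨i, hi⟩ := Function.ne_iff.1 hxy
    exact prod_eq_zero (mem_univ i) (by simp [hi])

lemma fcoef_sub (g h : (Fin n → Bool) → ℝ) (S : Finset (Fin n)) :
    fcoef n (fun x => g x - h x) S = fcoef n g S - fcoef n h S := by
  simp only [fcoef, sub_mul, hcExp_sub]

lemma fcoef_add (g h : (Fin n → Bool) → ℝ) (S : Finset (Fin n)) :
    fcoef n (fun x => g x + h x) S = fcoef n g S + fcoef n h S := by
  simp only [fcoef, add_mul, hcExp_add]

lemma fcoef_const_mul (c : ℝ) (g : (Fin n → Bool) → ℝ) (S : Finset (Fin n)) :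
    fcoef n (fun x => c * g x) S = c * fcoef n g S := by
  simp only [fcoef, mul_assoc, hcExp_const_mul]

lemma fcoef_sum {ι : Type*} (s : Finset ι) (g : ι → (Fin n → Bool) → ℝ) (S : Finset (Fin n)) :
    fcoef n (fun x => ∑ i ∈ s, g i x) S = ∑ i ∈ s, fcoef n (g i) S := by
  simp only [fcoef, sum_mul, hcExp_sum]

lemma fcoef_chi_mul (g : (Fin n → Bool) → ℝ) (S T : Finset (Fin n)) :
    fcoef n (fun x => chi T x * g x) S = fcoef n g (T ∆ S) := by
  simp only [fcoef, ← chi_mul_chi]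
  congr 1
  ext x
  ring

lemma fcoef_comp_hcFlip (g : (Fin n → Bool) → ℝ) (i : Fin n) (S : Finset (Fin n)) :
    fcoef n (fun x => g (hcFlip x i)) S = if i ∈ S then -fcoef n g S else fcoef n g S := by
  unfold fcoef
  rw [← hcExp_comp_hcFlip _ i]
  split_ifs with hi
  · rw [← neg_one_mul, ← hcExp_const_mul]
    simp only [hcFlip_hcFlip, chi_hcFlip, if_pos hi, mul_neg, neg_one_mul]
  · simp only [hcFlip_hcFlip, chi_hcFlip, if_neg hi]

lemma fcoef_chi (T S : Finset (Fin n)) : fcoef n (chi T) S = if T = S then 1 else 0 := by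
  simp only [fcoef, chi_mul_chi]
  exact (hcExp_chi (T ∆ S)).trans (by simp only [symmDiff_eq_empty])

lemma fcoef_sum_mul_chi (F : Finset (Finset (Fin n))) (a : Finset (Fin n) → ℝ)
    (S : Finset (Fin n)) :
    fcoef n (fun x => ∑ T ∈ F, a T * chi T x) S = if S ∈ F then a S else 0 := by
  simp only [fcoef_sum, fcoef_const_mul, fcoef_chi, mul_ite, mul_one, mul_zero, sum_ite_eq']

lemma sum_fcoef_mul_chi (g : (Fin n → Bool) → ℝ) (x : Fin n → Bool) :
    ∑ S : Finset (Fin n), fcoef n g S * chi S x = g x := by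
  calc ∑ S : Finset (Fin n), fcoef n g S * chi S x
      = ∑ S : Finset (Fin n), ∑ y, g y / 2 ^ n * (chi S y * chi S x) := by
        refine sum_congr rfl fun S _ => ?_
        rw [fcoef, hcExp, sum_div, sum_mul]
        exact sum_congr rfl fun y _ => by ring
    _ = ∑ y, g y / 2 ^ n * (if y = x then 2 ^ n else 0) := by
        rw [sum_comm]
        simp only [← mul_sum, sum_chi_mul_chi]
    _ = g x := by simp

lemma hcExp_mul_eq_sum_fcoef (g h : (Fin n → Bool) → ℝ) :
    hcExp n (fun x => g x * h x) = ∑ S : Finset (Fin n), fcoef n g S * fcoef n h S := by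
  calc hcExp n (fun x => g x * h x)
      = hcExp n (fun x => ∑ S : Finset (Fin n), fcoef n g S * (h x * chi S x)) := by
        congr 1
        ext x
        rw [← sum_fcoef_mul_chi g x, sum_mul]
        exact sum_congr rfl fun S _ => by ring
    _ = ∑ S : Finset (Fin n), fcoef n g S * fcoef n h S := by
        simp only [hcExp_sum, hcExp_const_mul, fcoef]

lemma hcExp_sq_eq_sum_fcoef_sq (g : (Fin n → Bool) → ℝ) :
    hcExp n (fun x => g x ^ 2) = ∑ S : Finset (Fin n), fcoef n g S ^ 2 := by
  simpa only [sq] using hcExp_mul_eq_sum_fcoef g g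

end Fourier

section Hypercontractivity

variable {n d e : ℕ} {g h : (Fin n → Bool) → ℝ}

/-- `g` has Fourier degree at most `d`: its Fourier coefficients vanish above level `d`. -/
def FourierDegLE (d : ℕ) (g : (Fin n → Bool) → ℝ) : Prop :=
  ∀ S : Finset (Fin n), d < #S → fcoef n g S = 0

lemma FourierDegLE.sum {ι : Type*} {I : Finset ι} {g : ι → (Fin n → Bool) → ℝ}
    (hg : ∀ i ∈ I, FourierDegLE d (g i)) : FourierDegLE d (fun x => ∑ i ∈ I, g i x) := by
  intro S hS
  rw [fcoef_sum]
  exact sum_eq_zero fun i hi => hg i hi S hS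

lemma FourierDegLE.mul (hg : FourierDegLE d g) (hh : FourierDegLE e h) :
    FourierDegLE (d + e) (fun x => g x * h x) := by
  intro S hS
  have hexpand : fcoef n (fun x => g x * h x) S =
      ∑ T : Finset (Fin n), fcoef n g T * fcoef n h (S ∆ T) := by
    simp only [← fcoef_chi_mul, ← hcExp_mul_eq_sum_fcoef]
    rw [fcoef]
    congr 1
    ext x
    ring
  rw [hexpand]
  refine sum_eq_zero fun T _ => ?_
  rcases lt_or_ge d #T with hT | hT
  · rw [hg T hT, zero_mul]
  · have hcard : #S ≤ #T + #(S ∆ T) := by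
      refine (card_le_card fun i hi => ?_).trans (card_union_le T (S ∆ T))
      by_cases hiT : i ∈ T <;> simp [mem_symmDiff, hi, hiT]
    rw [hh (S ∆ T) (by lia), mul_zero]

lemma FourierDegLE.sq (hg : FourierDegLE d g) : FourierDegLE (d + d) (fun x => g x ^ 2) := by
  simpa only [_root_.sq] using hg.mul hg

lemma hcExp_pow_four_add_chi_mul {i : Fin n} {u v : (Fin n → Bool) → ℝ}
    (hu : ∀ x, u (hcFlip x i) = u x) (hv : ∀ x, v (hcFlip x i) = v x) :
    hcExp n (fun x => (u x + chi {i} x * v x) ^ 4) =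
      hcExp n (fun x => u x ^ 4) + 6 * hcExp n (fun x => u x ^ 2 * v x ^ 2) +
        hcExp n (fun x => v x ^ 4) := by
  have hodd : hcExp n (fun x => chi {i} x * (4 * u x ^ 3 * v x + 4 * u x * v x ^ 3)) = 0 :=
    hcExp_eq_zero_of_hcFlip_eq_neg i fun x => by
      rw [hu, hv, chi_hcFlip, if_pos (mem_singleton_self i), neg_mul]
  rw [← hcExp_const_mul, ← hcExp_add, ← hcExp_add, ← sub_eq_zero, ← hcExp_sub, ← hodd]
  congr 1
  ext x
  linear_combination
    (6 * u x ^ 2 * v x ^ 2 + (chi {i} x ^ 2 + 1) * v x ^ 4 + 4 * chi {i} x * u x * v x ^ 3) *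
      chi_sq {i} x

lemma hcExp_pow_four_add_chi_mul_le {i : Fin n} {u v : (Fin n → Bool) → ℝ} {α β : ℝ}
    (hu : ∀ x, u (hcFlip x i) = u x) (hv : ∀ x, v (hcFlip x i) = v x) (hα : 0 ≤ α) (hβ : 0 ≤ β)
    (huα : hcExp n (fun x => u x ^ 4) ≤ α ^ 2) (hvβ : hcExp n (fun x => v x ^ 4) ≤ β ^ 2) :
    hcExp n (fun x => (u x + chi {i} x * v x) ^ 4) ≤ (α + 3 * β) ^ 2 := by
  have hcross : hcExp n (fun x => u x ^ 2 * v x ^ 2) ≤ α * β :=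
    hcExp_sq_mul_sq_le_of_fourth_moments hα hβ huα hvβ
  calc hcExp n (fun x => (u x + chi {i} x * v x) ^ 4)
      = hcExp n (fun x => u x ^ 4) + 6 * hcExp n (fun x => u x ^ 2 * v x ^ 2) +
          hcExp n (fun x => v x ^ 4) := hcExp_pow_four_add_chi_mul hu hv
    _ ≤ α ^ 2 + 6 * (α * β) + β ^ 2 := by gcongr
    _ ≤ (α + 3 * β) ^ 2 := by nlinarith [sq_nonneg β]

lemma hcExp_pow_four_sum_powerset_le (T : Finset (Fin n)) (a : Finset (Fin n) → ℝ) :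
    hcExp n (fun x => (∑ S ∈ T.powerset, a S * chi S x) ^ 4) ≤
      (∑ S ∈ T.powerset, 3 ^ #S * a S ^ 2) ^ 2 := by
  induction T using Finset.induction_on generalizing a with
  | empty => simp [chi_empty, hcExp_const, ← pow_mul]
  | insert i T hi ih =>
    have hnot : ∀ S ∈ T.powerset, i ∉ S := fun S hS h => hi (mem_powerset.1 hS h)
    let u (b : Finset (Fin n) → ℝ) (x : Fin n → Bool) : ℝ := ∑ S ∈ T.powerset, b S * chi S x
    let b (S : Finset (Fin n)) : ℝ := a (insert i S)
    let α : ℝ := ∑ S ∈ T.powerset, 3 ^ #S * a S ^ 2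
    let β : ℝ := ∑ S ∈ T.powerset, 3 ^ #S * b S ^ 2
    have hflip (b : Finset (Fin n) → ℝ) (x : Fin n → Bool) : u b (hcFlip x i) = u b x :=
      sum_congr rfl fun S hS => by rw [chi_hcFlip, if_neg (hnot S hS)]
    have hsplit (x : Fin n → Bool) :
        ∑ S ∈ (insert i T).powerset, a S * chi S x = u a x + chi {i} x * u b x := by
      rw [sum_powerset_insert hi, mul_sum]
      congr 1
      refine sum_congr rfl fun S hS => ?_
      rw [chi_insert (hnot S hS), mul_left_comm]
    have hnorm : ∑ S ∈ (insert i T).powerset, 3 ^ #S * a S ^ 2 = α + 3 * β := by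
      rw [sum_powerset_insert hi, mul_sum]
      congr 1
      refine sum_congr rfl fun S hS => ?_
      rw [card_insert_of_notMem (hnot S hS), pow_succ', mul_assoc]
    simp only [hsplit, hnorm]
    exact hcExp_pow_four_add_chi_mul_le (hflip a) (hflip b) (by positivity) (by positivity)
      (ih a) (ih b)

lemma FourierDegLE.hcExp_pow_four_le (hg : FourierDegLE d g) :
    hcExp n (fun x => g x ^ 4) ≤ (3 ^ d * hcExp n (fun x => g x ^ 2)) ^ 2 := by
  have hbonami := hcExp_pow_four_sum_powerset_le univ (fcoef n g)
  simp only [powerset_univ, sum_fcoef_mul_chi] at hbonami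
  refine hbonami.trans ?_
  rw [hcExp_sq_eq_sum_fcoef_sq, mul_sum]
  refine pow_le_pow_left₀ (by positivity) (sum_le_sum fun S _ => ?_) 2
  rcases lt_or_ge d #S with hS | hS
  · simp [hg S hS]
  · gcongr
    norm_num

lemma FourierDegLE.hcExp_two_pow_le (m : ℕ) (hg : FourierDegLE d g) :
    hcExp n (fun x => g x ^ 2 ^ (m + 1)) ≤ (3 ^ (m * d) * hcExp n (fun x => g x ^ 2)) ^ 2 ^ m := by
  induction m generalizing d g with
  | zero => simp
  | succ m ih =>
    calc hcExp n (fun x => g x ^ 2 ^ (m + 1 + 1))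
        = hcExp n (fun x => (g x ^ 2) ^ 2 ^ (m + 1)) := by
          simp only [← pow_mul, pow_succ' 2 (m + 1)]
      _ ≤ (3 ^ (m * (d + d)) * hcExp n (fun x => (g x ^ 2) ^ 2)) ^ 2 ^ m := ih hg.sq
      _ ≤ (3 ^ (m * (d + d)) * (3 ^ d * hcExp n (fun x => g x ^ 2)) ^ 2) ^ 2 ^ m := by
        have hnn : 0 ≤ hcExp n fun x => (g x ^ 2) ^ 2 := hcExp_nonneg fun x => sq_nonneg _
        gcongr
        simpa only [← pow_mul] using hg.hcExp_pow_four_le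
      _ = (3 ^ ((m + 1) * d) * hcExp n (fun x => g x ^ 2)) ^ 2 ^ (m + 1) := by
        rw [pow_succ' 2 m, pow_mul _ 2]
        congr 1
        ring

variable {ι : Type*} {I : Finset ι}

lemma hcExp_sum_sq_sq_le {G : ι → (Fin n → Bool) → ℝ} (hG : ∀ i ∈ I, FourierDegLE d (G i)) :
    hcExp n (fun x => (∑ i ∈ I, G i x ^ 2) ^ 2) ≤
      (3 ^ d * ∑ i ∈ I, hcExp n (fun x => G i x ^ 2)) ^ 2 := by
  have hnn (i : ι) : 0 ≤ 3 ^ d * hcExp n (fun x => G i x ^ 2) :=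
    mul_nonneg (by positivity) (hcExp_nonneg fun x => sq_nonneg _)
  rw [sq (3 ^ d * _), mul_sum, sum_mul_sum]
  simp only [sq (∑ _i ∈ I, _), sum_mul_sum, hcExp_sum]
  exact sum_le_sum fun i hi => sum_le_sum fun j hj =>
    hcExp_sq_mul_sq_le_of_fourth_moments (hnn i) (hnn j) (hG i hi).hcExp_pow_four_le
      (hG j hj).hcExp_pow_four_le

lemma hcExp_sum_sq_two_pow_le (m : ℕ) {G : ι → (Fin n → Bool) → ℝ}
    (hG : ∀ i ∈ I, FourierDegLE d (G i)) :
    hcExp n (fun x => (∑ i ∈ I, G i x ^ 2) ^ 2 ^ m) ≤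
      (3 ^ (m * d) * ∑ i ∈ I, hcExp n (fun x => G i x ^ 2)) ^ 2 ^ m := by
  cases m with
  | zero => simp [hcExp_sum]
  | succ m =>
    calc hcExp n (fun x => (∑ i ∈ I, G i x ^ 2) ^ 2 ^ (m + 1))
        ≤ (3 ^ (m * (d + d)) * hcExp n (fun x => (∑ i ∈ I, G i x ^ 2) ^ 2)) ^ 2 ^ m :=
          (FourierDegLE.sum fun i hi => (hG i hi).sq).hcExp_two_pow_le m
      _ ≤ (3 ^ (m * (d + d)) *
            (3 ^ d * ∑ i ∈ I, hcExp n (fun x => G i x ^ 2)) ^ 2) ^ 2 ^ m := by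
        have hnn : 0 ≤ hcExp n fun x => (∑ i ∈ I, G i x ^ 2) ^ 2 :=
          hcExp_nonneg fun x => by positivity
        gcongr
        exact hcExp_sum_sq_sq_le hG
      _ = (3 ^ ((m + 1) * d) * ∑ i ∈ I, hcExp n (fun x => G i x ^ 2)) ^ 2 ^ (m + 1) := by
        rw [pow_succ' 2 m, pow_mul _ 2]
        congr 1
        ring

end Hypercontractivity

section LevelInequality

variable {n : ℕ}

/-- Fourier weight at levels `≤ d`, complementing `wGe`. -/
def wLe (n : ℕ) (g : (Fin n → Bool) → ℝ) (d : ℕ) : ℝ :=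
  ∑ S : Finset (Fin n) with #S ≤ d, fcoef n g S ^ 2

/-- The degree-`d` truncation of the Fourier expansion of `g`. -/
def lowDegPart (d : ℕ) (g : (Fin n → Bool) → ℝ) (x : Fin n → Bool) : ℝ :=
  ∑ S : Finset (Fin n) with #S ≤ d, fcoef n g S * chi S x

lemma wLe_add_le (g h : (Fin n → Bool) → ℝ) (d : ℕ) :
    wLe n (fun x => g x + h x) d ≤ 2 * (wLe n g d + wLe n h d) := by
  simp only [wLe, ← sum_add_distrib, mul_sum, fcoef_add]
  exact sum_le_sum fun S _ => add_sq_le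

lemma fcoef_lowDegPart (d : ℕ) (g : (Fin n → Bool) → ℝ) (S : Finset (Fin n)) :
    fcoef n (lowDegPart d g) S = if #S ≤ d then fcoef n g S else 0 := by
  simpa only [mem_filter_univ] using! fcoef_sum_mul_chi {S | #S ≤ d} (fcoef n g) S

lemma fourierDegLE_lowDegPart (d : ℕ) (g : (Fin n → Bool) → ℝ) :
    FourierDegLE d (lowDegPart d g) := fun S hS => by
  rw [fcoef_lowDegPart, if_neg hS.not_ge]

lemma hcExp_mul_lowDegPart (d : ℕ) (g : (Fin n → Bool) → ℝ) :
    hcExp n (fun x => g x * lowDegPart d g x) = wLe n g d := by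
  simp only [hcExp_mul_eq_sum_fcoef, fcoef_lowDegPart, mul_ite, mul_zero, ← sq, ← sum_filter, wLe]

lemma hcExp_lowDegPart_sq (d : ℕ) (g : (Fin n → Bool) → ℝ) :
    hcExp n (fun x => lowDegPart d g x ^ 2) = wLe n g d := by
  simp [hcExp_sq_eq_sum_fcoef_sq, fcoef_lowDegPart, ite_pow, ← sum_filter, wLe]

variable {ι : Type*}

lemma wLe_nonneg (g : (Fin n → Bool) → ℝ) (d : ℕ) : 0 ≤ wLe n g d :=
  sum_nonneg fun _ _ => sq_nonneg _

lemma sqrt_rpow_two_pow_succ {a : ℝ} (ha : 0 ≤ a) (m : ℕ) :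
    √a ^ (2 ^ (m + 1) : ℝ) = a ^ 2 ^ m := by
  rw [← Nat.cast_ofNat, ← Nat.cast_pow, Real.rpow_natCast, pow_succ' 2 m, pow_mul, Real.sq_sqrt ha]

lemma hcExp_sqrt_sum_lowDegPart_sq_rpow_le (m : ℕ) (I : Finset ι) (h : ι → (Fin n → Bool) → ℝ)
    (d : ℕ) :
    hcExp n (fun x => √(∑ i ∈ I, lowDegPart d (h i) x ^ 2) ^ (2 ^ (m + 1) : ℝ)) ≤
      √(3 ^ (m * d) * ∑ i ∈ I, wLe n (h i) d) ^ (2 ^ (m + 1) : ℝ) := by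
  have hV : 0 ≤ ∑ i ∈ I, wLe n (h i) d := sum_nonneg fun i _ => wLe_nonneg (h i) d
  simp only [sqrt_rpow_two_pow_succ (sum_nonneg fun i _ => sq_nonneg (lowDegPart d (h i) _))]
  rw [sqrt_rpow_two_pow_succ (by positivity),
    ← sum_congr rfl fun i _ => hcExp_lowDegPart_sq d (h i)]
  exact hcExp_sum_sq_two_pow_le m fun i _ => fourierDegLE_lowDegPart d (h i)

lemma sum_wLe_le_mul_sqrt_sum_wLe {m : ℕ} {q : ℝ} (hq : (2 ^ (m + 1) : ℝ).HolderConjugate q)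
    (I : Finset ι) (h : ι → (Fin n → Bool) → ℝ) (d : ℕ) :
    ∑ i ∈ I, wLe n (h i) d ≤
      hcExp n (fun x => √(∑ i ∈ I, h i x ^ 2) ^ q) ^ (1 / q) *
        √(3 ^ (m * d) * ∑ i ∈ I, wLe n (h i) d) := by
  let k : ℝ := 2 ^ (m + 1)
  let G (i : ι) : (Fin n → Bool) → ℝ := lowDegPart d (h i)
  let N : ℝ := hcExp n (fun x => √(∑ i ∈ I, h i x ^ 2) ^ q) ^ (1 / q)
  have hN : 0 ≤ N := Real.rpow_nonneg (hcExp_nonneg fun x => by positivity) _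
  have hG : 0 ≤ hcExp n (fun x => √(∑ i ∈ I, G i x ^ 2) ^ k) :=
    hcExp_nonneg fun x => by positivity
  calc ∑ i ∈ I, wLe n (h i) d
      = hcExp n (fun x => ∑ i ∈ I, h i x * G i x) := by
        rw [hcExp_sum]
        exact sum_congr rfl fun i _ => (hcExp_mul_lowDegPart d (h i)).symm
    _ ≤ hcExp n (fun x => √(∑ i ∈ I, h i x ^ 2) * √(∑ i ∈ I, G i x ^ 2)) :=
        hcExp_mono fun x => Real.sum_mul_le_sqrt_mul_sqrt _ _ _
    _ ≤ N * hcExp n (fun x => √(∑ i ∈ I, G i x ^ 2) ^ k) ^ (1 / k) :=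
        hcExp_mul_le_Lp_mul_Lq hq.symm (fun x => Real.sqrt_nonneg _) fun x => Real.sqrt_nonneg _
    _ ≤ N * (√(3 ^ (m * d) * ∑ i ∈ I, wLe n (h i) d) ^ k) ^ (1 / k) := by
        gcongr
        exact hcExp_sqrt_sum_lowDegPart_sq_rpow_le m I h d
    _ = N * √(3 ^ (m * d) * ∑ i ∈ I, wLe n (h i) d) := by
        rw [one_div, Real.rpow_rpow_inv (Real.sqrt_nonneg _) (by positivity)]

lemma sum_wLe_le_hcExp_sqrt_rpow {m : ℕ} {q : ℝ} (hq : (2 ^ (m + 1) : ℝ).HolderConjugate q)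
    (I : Finset ι) (h : ι → (Fin n → Bool) → ℝ) (d : ℕ) :
    ∑ i ∈ I, wLe n (h i) d ≤
      3 ^ (m * d) * hcExp n (fun x => √(∑ i ∈ I, h i x ^ 2) ^ q) ^ (2 / q) := by
  have hdual := sum_wLe_le_mul_sqrt_sum_wLe hq I h d
  have hE : 0 ≤ hcExp n (fun x => √(∑ i ∈ I, h i x ^ 2) ^ q) :=
    hcExp_nonneg fun x => by positivity
  have hV : 0 ≤ ∑ i ∈ I, wLe n (h i) d := sum_nonneg fun i _ => wLe_nonneg (h i) d
  rw [show 2 / q = 1 / q * (2 : ℕ) by push_cast; ring, Real.rpow_mul_natCast hE]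
  generalize ∑ i ∈ I, wLe n (h i) d = V at hdual hV ⊢
  generalize hcExp n (fun x => √(∑ i ∈ I, h i x ^ 2) ^ q) ^ (1 / q) = N at hdual ⊢
  have hsq : V * V ≤ 3 ^ (m * d) * N ^ 2 * V := by
    calc V * V = V ^ 2 := (sq V).symm
      _ ≤ (N * √(3 ^ (m * d) * V)) ^ 2 := by gcongr
      _ = 3 ^ (m * d) * N ^ 2 * V := by
        rw [mul_pow, Real.sq_sqrt (by positivity)]
        ring
  rcases hV.eq_or_lt with h0 | hpos
  · rw [← h0]
    positivity
  · exact le_of_mul_le_mul_right hsq hpos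

lemma wLe_le_of_forall_eq_zero_or_abs_eq_one {m : ℕ} {q τ : ℝ}
    (hq : (2 ^ (m + 1) : ℝ).HolderConjugate q) (hq' : q ≤ 4 / 3) {h : (Fin n → Bool) → ℝ}
    (hh : ∀ x, h x = 0 ∨ |h x| = 1) (hτ : hcExp n (fun x => h x ^ 2) ≤ τ) (d : ℕ) :
    wLe n h d ≤ 3 ^ (m * d) * (√τ * hcExp n (fun x => h x ^ 2)) := by
  set E : ℝ := hcExp n (fun x => h x ^ 2)
  have hq0 : 0 < q := hq.symm.pos
  have hE0 : 0 ≤ E := hcExp_nonneg fun x => sq_nonneg _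
  have hE1 : E ≤ 1 := by
    rw [← hcExp_const n 1]
    exact hcExp_mono fun x => by rcases hh x with h0 | h1 <;> simp [← sq_abs (h x), *]
  have hrpow : hcExp n (fun x => √(∑ _i ∈ {()}, h x ^ 2) ^ q) = E := by
    congr 1
    ext x
    rw [sum_singleton, Real.sqrt_sq_eq_abs, ← sq_abs]
    rcases hh x with h0 | h1 <;> simp [*, hq0.ne']
  have hlevel := sum_wLe_le_hcExp_sqrt_rpow hq {()} (fun _ => h) d
  rw [sum_singleton, hrpow] at hlevel
  refine hlevel.trans ?_
  gcongr
  -- `q ≤ 4 / 3` means `3 / 2 ≤ 2 / q`, so one gains a factor `√E` over the bound `E`.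
  calc E ^ (2 / q) ≤ E ^ (1 / 2 + 1 : ℝ) := by
        refine Real.rpow_le_rpow_of_exponent_ge' hE0 hE1 (by norm_num) ?_
        rw [le_div_iff₀ hq0]
        linarith
    _ = √E * E := by
        rw [Real.rpow_add_of_nonneg hE0 (by norm_num) zero_le_one, Real.rpow_one, Real.sqrt_eq_rpow]
    _ ≤ √τ * E := by gcongr

end LevelInequality

section Derivatives

variable {n : ℕ}

lemma derivOn_eq_chi_mul (g : (Fin n → Bool) → ℝ) (i : Fin n) (x : Fin n → Bool) :
    derivOn g i x = chi {i} x * (g x - g (hcFlip x i)) := by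
  have hself : Function.update x i (x i) = x := Function.update_eq_self i x
  cases hx : x i <;> rw [hx] at hself <;> simp [derivOn, chi, hcFlip, hx, hself]

lemma fcoef_derivOn (g : (Fin n → Bool) → ℝ) (i : Fin n) (S : Finset (Fin n)) :
    fcoef n (derivOn g i) S = if i ∈ S then 0 else 2 * fcoef n g (insert i S) := by
  rw [funext (derivOn_eq_chi_mul g i), fcoef_chi_mul, fcoef_sub, fcoef_comp_hcFlip]
  by_cases hi : i ∈ S
  · simp [hi, mem_symmDiff]
  · have hins : {i} ∆ S = insert i S := by
      ext j
      grind [mem_symmDiff]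
    simp only [hins, hi, mem_insert_self, if_true, if_false]
    ring

/-- The coordinates at which `f` is sensitive at `x`, so that `sens f x` counts them. -/
def sensitiveCoords (f : (Fin n → Bool) → Bool) (x : Fin n → Bool) : Finset (Fin n) :=
  {i | f (hcFlip x i) ≠ f x}

lemma card_sensitiveCoords (f : (Fin n → Bool) → Bool) (x : Fin n → Bool) :
    #(sensitiveCoords f x) = sens f x := rfl

lemma derivOn_toReal_sq (f : (Fin n → Bool) → Bool) (i : Fin n) (x : Fin n → Bool) :
    derivOn (toReal f) i x ^ 2 = if i ∈ sensitiveCoords f x then 1 else 0 := by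
  rw [derivOn_eq_chi_mul, mul_pow, chi_sq]
  cases h : f x <;> cases h' : f (hcFlip x i) <;> simp [sensitiveCoords, toReal, h, h']

lemma sum_derivOn_toReal_sq (f : (Fin n → Bool) → Bool) (J : Finset (Fin n)) (x : Fin n → Bool) :
    ∑ i ∈ J, derivOn (toReal f) i x ^ 2 = #(J ∩ sensitiveCoords f x) := by
  simp [derivOn_toReal_sq]

end Derivatives

section Restriction

lemma sum_card_inter_eq_one {ι M : Type*} [Fintype ι] [DecidableEq ι] [AddCommMonoid M]
    (S : Finset ι) (F : Finset ι → M) :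
    ∑ T with #(S ∩ T) = 1, F T = ∑ i ∈ S, ∑ T with S ∩ T = {i}, F T := by
  simp only [sum_filter]
  rw [sum_comm]
  refine sum_congr rfl fun T _ => ?_
  by_cases hcard : #(S ∩ T) = 1
  · obtain ⟨j, hj⟩ := card_eq_one.1 hcard
    have hjS : j ∈ S := (mem_inter.1 (hj ▸ mem_singleton_self j)).1
    simp [hj, hjS]
  · rw [if_neg hcard]
    exact (sum_eq_zero fun i _ => if_neg fun h => hcard (card_eq_one.2 ⟨i, h⟩)).symm

variable {n : ℕ}

lemma chi_piecewise (S J : Finset (Fin n)) (x y : Fin n → Bool) :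
    chi S (J.piecewise y x) = chi (J ∩ S) y * chi (S \ J) x := by
  unfold chi
  rw [← prod_inter_mul_prod_sdiff S J, inter_comm]
  congr 1
  · refine prod_congr rfl fun i hi => ?_
    rw [piecewise_eq_of_mem _ _ _ (mem_inter.1 hi).1]
  · refine prod_congr rfl fun i hi => ?_
    rw [piecewise_eq_of_notMem _ _ _ (mem_sdiff.1 hi).2]

lemma fcoef_piecewise (g : (Fin n → Bool) → ℝ) (J T : Finset (Fin n)) (x : Fin n → Bool) :
    fcoef n (fun y => g (J.piecewise y x)) T =
      ∑ S with J ∩ S = T, fcoef n g S * chi (S \ J) x := by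
  have hexpand (y : Fin n → Bool) : g (J.piecewise y x) =
      ∑ S, fcoef n g S * chi (S \ J) x * chi (J ∩ S) y := by
    rw [← sum_fcoef_mul_chi g]
    exact sum_congr rfl fun S _ => by rw [chi_piecewise]; ring
  simp only [hexpand, fcoef_sum, fcoef_const_mul, fcoef_chi, mul_ite, mul_one, mul_zero,
    sum_filter]

lemma sum_fcoef_singleton_sq_le_one {g : (Fin n → Bool) → ℝ} (hg : ∀ x, |g x| ≤ 1)
    (J : Finset (Fin n)) : ∑ i ∈ J, fcoef n g {i} ^ 2 ≤ 1 := by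
  calc ∑ i ∈ J, fcoef n g {i} ^ 2
      = ∑ S ∈ J.image singleton, fcoef n g S ^ 2 := by
        rw [sum_image singleton_injective.injOn]
    _ ≤ ∑ S, fcoef n g S ^ 2 :=
      sum_le_sum_of_subset_of_nonneg (subset_univ _) fun S _ _ => sq_nonneg _
    _ = hcExp n (fun x => g x ^ 2) := (hcExp_sq_eq_sum_fcoef_sq g).symm
    _ ≤ hcExp n (fun _ => 1) := hcExp_mono fun x => (sq_le_one_iff_abs_le_one _).2 (hg x)
    _ = 1 := hcExp_const n 1

lemma hcExp_fcoef_piecewise_mul_derivOn (g : (Fin n → Bool) → ℝ) (J : Finset (Fin n))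
    (i : Fin n) :
    hcExp n (fun x => fcoef n (fun y => g (J.piecewise y x)) {i} * derivOn g i x) =
      2 * ∑ S with J ∩ S = {i}, fcoef n g S ^ 2 := by
  simp only [fcoef_piecewise, sum_mul, hcExp_sum, mul_sum]
  refine sum_congr rfl fun S hS => ?_
  have hi : i ∈ J ∩ S := (mem_filter_univ S).1 hS ▸ mem_singleton_self i
  have hins : insert i (S \ J) = S := by
    rw [insert_eq, ← (mem_filter_univ S).1 hS, inter_comm, union_comm, sdiff_union_inter]
  calc hcExp n (fun x => fcoef n g S * chi (S \ J) x * derivOn g i x)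
      = fcoef n g S * fcoef n (derivOn g i) (S \ J) := by
        simp only [mul_assoc, hcExp_const_mul, mul_comm (chi _ _), fcoef]
    _ = 2 * fcoef n g S ^ 2 := by
        rw [fcoef_derivOn, if_neg (by simp [(mem_inter.1 hi).1]), hins]
        ring

lemma sum_fcoef_sq_card_inter_eq_one_le {g : (Fin n → Bool) → ℝ} (hg : ∀ x, |g x| ≤ 1)
    (J : Finset (Fin n)) :
    ∑ S with #(J ∩ S) = 1, fcoef n g S ^ 2 ≤
      1 / 2 * hcExp n (fun x => √(∑ i ∈ J, derivOn g i x ^ 2)) := by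
  let c (i : Fin n) (x : Fin n → Bool) : ℝ := fcoef n (fun y => g (J.piecewise y x)) {i}
  calc ∑ S with #(J ∩ S) = 1, fcoef n g S ^ 2
      = 1 / 2 * hcExp n (fun x => ∑ i ∈ J, c i x * derivOn g i x) := by
        rw [sum_card_inter_eq_one, hcExp_sum, mul_sum]
        refine sum_congr rfl fun i _ => ?_
        rw [hcExp_fcoef_piecewise_mul_derivOn]
        ring
    _ ≤ 1 / 2 * hcExp n (fun x => √(∑ i ∈ J, derivOn g i x ^ 2)) := by
        gcongr
        refine hcExp_mono fun x => (Real.sum_mul_le_sqrt_mul_sqrt J _ _).trans ?_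
        have hc : √(∑ i ∈ J, c i x ^ 2) ≤ 1 :=
          Real.sqrt_le_one.2 (sum_fcoef_singleton_sq_le_one (fun y => hg _) J)
        exact mul_le_of_le_one_left (Real.sqrt_nonneg _) hc

end Restriction

section RandomSubset

variable {ι : Type*} [Fintype ι] [DecidableEq ι] {a p : ℝ}

/-- The probability that a random subset of `ι`, containing each element independently with
probability `a`, equals `J`. -/
def bernoulliWeight (a : ℝ) (J : Finset ι) : ℝ :=
  ∏ i, if i ∈ J then a else 1 - a

lemma bernoulliWeight_nonneg (ha0 : 0 ≤ a) (ha1 : a ≤ 1) (J : Finset ι) :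
    0 ≤ bernoulliWeight a J :=
  prod_nonneg fun i _ => by split_ifs <;> linarith

lemma sum_prod_ite_mem (u v : ι → ℝ) :
    ∑ J : Finset ι, ∏ i, (if i ∈ J then u i else v i) = ∏ i, (u i + v i) := by
  simp [prod_add, prod_ite, filter_not]

lemma sum_bernoulliWeight_inter_eq (a : ℝ) {S T : Finset ι} (hTS : T ⊆ S) :
    ∑ J with S ∩ J = T, bernoulliWeight a J = a ^ #T * (1 - a) ^ #(S \ T) := by
  let u (i : ι) : ℝ := if i ∈ S \ T then 0 else a
  let v (i : ι) : ℝ := if i ∈ T then 0 else 1 - a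
  have hconstraint (J : Finset ι) : (if S ∩ J = T then bernoulliWeight a J else 0) =
      ∏ i, if i ∈ J then u i else v i := by
    split_ifs with hJ
    · refine prod_congr rfl fun i _ => ?_
      have := Finset.ext_iff.1 hJ i
      grind
    · obtain ⟨i, hi⟩ : ∃ i, ¬(i ∈ S ∩ J ↔ i ∈ T) := by simpa [Finset.ext_iff] using hJ
      refine (prod_eq_zero (mem_univ i) ?_).symm
      grind
  have hmarginal (i : ι) : u i + v i = if i ∈ S then if i ∈ T then a else 1 - a else 1 := by
    grind
  rw [sum_filter, sum_congr rfl fun J _ => hconstraint J, sum_prod_ite_mem]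
  simp only [hmarginal]
  rw [prod_ite_mem, univ_inter, prod_ite, prod_const, prod_const, filter_mem_eq_inter,
    inter_eq_right.2 hTS, filter_notMem_eq_sdiff]

lemma sum_bernoulliWeight (a : ℝ) : ∑ J : Finset ι, bernoulliWeight a J = 1 := by
  simpa using sum_bernoulliWeight_inter_eq a (empty_subset (∅ : Finset ι))

-- For `S = ∅` the truncated exponent `#S - 1` is harmless, since the factor `#S` vanishes.
lemma sum_bernoulliWeight_card_inter_eq_one (a : ℝ) (S : Finset ι) :
    ∑ J with #(S ∩ J) = 1, bernoulliWeight a J = #S * (a * (1 - a) ^ (#S - 1)) := by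
  rw [sum_card_inter_eq_one, ← nsmul_eq_mul, ← sum_const]
  refine sum_congr rfl fun i hi => ?_
  rw [sum_bernoulliWeight_inter_eq a (singleton_subset_iff.2 hi), card_singleton, pow_one,
    sdiff_singleton_eq_erase, card_erase_of_mem hi]

lemma sum_bernoulliWeight_mul_card_inter (a : ℝ) (U : Finset ι) :
    ∑ J : Finset ι, bernoulliWeight a J * #(J ∩ U) = a * #U := by
  have hmem (i : ι) : ∑ J : Finset ι, bernoulliWeight a J * (if i ∈ J then 1 else 0) = a := by
    simpa [sum_filter] using sum_bernoulliWeight_inter_eq a (subset_refl {i})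
  calc ∑ J : Finset ι, bernoulliWeight a J * #(J ∩ U)
      = ∑ J : Finset ι, ∑ i ∈ U, bernoulliWeight a J * (if i ∈ J then 1 else 0) := by
        simp only [← mul_sum, sum_boole, filter_mem_eq_inter, inter_comm]
    _ = a * #U := by
        rw [sum_comm, sum_congr rfl fun i _ => hmem i, sum_const, nsmul_eq_mul, mul_comm]

lemma sum_bernoulliWeight_mul_sqrt_card_inter_le (ha0 : 0 ≤ a) (ha1 : a ≤ 1) (hp : 1 / 2 ≤ p)
    (hp1 : p ≤ 1) (U : Finset ι) :
    ∑ J : Finset ι, bernoulliWeight a J * √(#(J ∩ U) : ℝ) ≤ a ^ p * (#U : ℝ) ^ p := by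
  have hsqrt (k : ℕ) : √(k : ℝ) ≤ (k : ℝ) ^ p := by
    rcases Nat.eq_zero_or_pos k with rfl | hk
    · simpa using Real.rpow_nonneg le_rfl p
    · rw [Real.sqrt_eq_rpow]
      exact Real.rpow_le_rpow_of_exponent_le (mod_cast hk) hp
  calc ∑ J : Finset ι, bernoulliWeight a J * √(#(J ∩ U) : ℝ)
      ≤ ∑ J : Finset ι, bernoulliWeight a J * (#(J ∩ U) : ℝ) ^ p :=
        sum_le_sum fun J _ =>
          mul_le_mul_of_nonneg_left (hsqrt _) (bernoulliWeight_nonneg ha0 ha1 J)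
    _ ≤ (∑ J : Finset ι, bernoulliWeight a J * #(J ∩ U)) ^ p :=
        (Real.concaveOn_rpow (by linarith) hp1).le_map_sum
          (fun J _ => bernoulliWeight_nonneg ha0 ha1 J) (sum_bernoulliWeight a)
          fun J _ => Set.mem_Ici.2 (Nat.cast_nonneg _)
    _ = a ^ p * (#U : ℝ) ^ p := by
        rw [sum_bernoulliWeight_mul_card_inter, Real.mul_rpow ha0 (Nat.cast_nonneg _)]

end RandomSubset

section Tail

variable {n : ℕ} {a p t : ℝ}

lemma abs_toReal_le_one (f : (Fin n → Bool) → Bool) (x : Fin n → Bool) : |toReal f x| ≤ 1 := by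
  unfold toReal
  split_ifs <;> simp

lemma hcExp_sens_rpow_nonneg (f : (Fin n → Bool) → Bool) (p : ℝ) :
    0 ≤ hcExp n (fun x => (sens f x : ℝ) ^ p) :=
  hcExp_nonneg fun _ => Real.rpow_nonneg (Nat.cast_nonneg _) p

lemma sum_fcoef_sq_mul_card_mul_le (f : (Fin n → Bool) → Bool) (ha0 : 0 ≤ a) (ha1 : a ≤ 1)
    (hp : 1 / 2 ≤ p) (hp1 : p ≤ 1) :
    ∑ S, fcoef n (toReal f) S ^ 2 * (#S * (a * (1 - a) ^ (#S - 1))) ≤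
      1 / 2 * (a ^ p * hcExp n (fun x => (sens f x : ℝ) ^ p)) := by
  calc ∑ S, fcoef n (toReal f) S ^ 2 * (#S * (a * (1 - a) ^ (#S - 1)))
      = ∑ J, bernoulliWeight a J * ∑ S with #(J ∩ S) = 1, fcoef n (toReal f) S ^ 2 := by
        simp only [← sum_bernoulliWeight_card_inter_eq_one, mul_sum, sum_filter]
        rw [sum_comm]
        simp only [inter_comm, mul_ite, mul_zero, mul_comm]
    _ ≤ ∑ J, bernoulliWeight a J *
          (1 / 2 * hcExp n (fun x => √(∑ i ∈ J, derivOn (toReal f) i x ^ 2))) :=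
        sum_le_sum fun J _ => mul_le_mul_of_nonneg_left
          (sum_fcoef_sq_card_inter_eq_one_le (abs_toReal_le_one f) J)
          (bernoulliWeight_nonneg ha0 ha1 J)
    _ = 1 / 2 * hcExp n (fun x =>
          ∑ J, bernoulliWeight a J * √(#(J ∩ sensitiveCoords f x) : ℝ)) := by
        simp only [hcExp_sum, hcExp_const_mul, sum_derivOn_toReal_sq, mul_sum, mul_left_comm]
    _ ≤ 1 / 2 * hcExp n (fun x => a ^ p * (sens f x : ℝ) ^ p) := by
        gcongr
        exact hcExp_mono fun x =>
          sum_bernoulliWeight_mul_sqrt_card_inter_le ha0 ha1 hp hp1 (sensitiveCoords f x)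
    _ = 1 / 2 * (a ^ p * hcExp n (fun x => (sens f x : ℝ) ^ p)) := by rw [hcExp_const_mul]

lemma integral_natCast_mul_one_sub_pow (k : ℕ) (t : ℝ) :
    ∫ a in 0..t, (k * (1 - a) ^ (k - 1) : ℝ) = 1 - (1 - t) ^ k := by
  have hderiv (a : ℝ) : HasDerivAt (fun a : ℝ => -(1 - a) ^ k) (k * (1 - a) ^ (k - 1)) a := by
    simpa using! (((hasDerivAt_id a).const_sub 1).pow k).neg
  rw [intervalIntegral.integral_eq_sub_of_hasDerivAt (fun a _ => hderiv a)
    (Continuous.intervalIntegrable (by fun_prop) _ _)]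
  ring

lemma sum_fcoef_sq_mul_one_sub_pow_le (f : (Fin n → Bool) → Bool) (ht0 : 0 ≤ t) (ht1 : t ≤ 1)
    (hp : 1 / 2 ≤ p) (hp1 : p ≤ 1) :
    ∑ S, fcoef n (toReal f) S ^ 2 * (1 - (1 - t) ^ #S) ≤
      t ^ p * hcExp n (fun x => (sens f x : ℝ) ^ p) := by
  set A : ℝ := hcExp n (fun x => (sens f x : ℝ) ^ p)
  have hA : 0 ≤ A := hcExp_sens_rpow_nonneg f p
  have hrate : ∀ a ∈ Set.Ioo 0 t,
      ∑ S, fcoef n (toReal f) S ^ 2 * (#S * (1 - a) ^ (#S - 1)) ≤ 1 / 2 * A * a ^ (p - 1) := by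
    rintro a ⟨ha0, hat⟩
    refine le_of_mul_le_mul_left ?_ ha0
    calc a * ∑ S, fcoef n (toReal f) S ^ 2 * (#S * (1 - a) ^ (#S - 1))
        = ∑ S, fcoef n (toReal f) S ^ 2 * (#S * (a * (1 - a) ^ (#S - 1))) := by
          simp only [mul_sum, mul_left_comm a]
      _ ≤ 1 / 2 * (a ^ p * A) :=
          sum_fcoef_sq_mul_card_mul_le f ha0.le (hat.le.trans ht1) hp hp1
      _ = a * (1 / 2 * A * a ^ (p - 1)) := by
          rw [Real.rpow_sub_one ha0.ne']
          field_simp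
  calc ∑ S, fcoef n (toReal f) S ^ 2 * (1 - (1 - t) ^ #S)
      = ∫ a in 0..t, ∑ S, fcoef n (toReal f) S ^ 2 * (#S * (1 - a) ^ (#S - 1)) := by
        rw [intervalIntegral.integral_finsetSum fun S _ =>
          Continuous.intervalIntegrable (by fun_prop) _ _]
        refine sum_congr rfl fun S _ => ?_
        rw [intervalIntegral.integral_const_mul, integral_natCast_mul_one_sub_pow]
    _ ≤ ∫ a in 0..t, 1 / 2 * A * a ^ (p - 1) :=
        intervalIntegral.integral_mono_on_of_le_Ioo ht0
          (Continuous.intervalIntegrable (by fun_prop) _ _)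
          ((intervalIntegral.intervalIntegrable_rpow' (by linarith)).const_mul _) hrate
    _ = t ^ p * A / (2 * p) := by
        rw [intervalIntegral.integral_const_mul, integral_rpow (.inl (by linarith)),
          sub_add_cancel, Real.zero_rpow (by linarith)]
        ring
    _ ≤ t ^ p * A := div_le_self (by positivity) (by linarith)

lemma wGe_toReal_le (f : (Fin n → Bool) → Bool) {D : ℕ} (hD : D ≠ 0) (hp : 1 / 2 ≤ p)
    (hp1 : p ≤ 1) :
    wGe n (toReal f) D ≤ 2 * ((D : ℝ) ^ (-p) * hcExp n (fun x => (sens f x : ℝ) ^ p)) := by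
  have hD1 : (1 : ℝ) ≤ D := mod_cast Nat.one_le_iff_ne_zero.2 hD
  have ht0 : (0 : ℝ) ≤ 1 / D := by positivity
  have ht1 : (1 : ℝ) / D ≤ 1 := (div_le_one (by linarith)).2 hD1
  have hhalf (k : ℕ) (hk : D ≤ k) : (1 - 1 / D : ℝ) ^ k ≤ 1 / 2 := by
    calc (1 - 1 / D : ℝ) ^ k ≤ (1 - 1 / D : ℝ) ^ D :=
          pow_le_pow_of_le_one (by linarith) (by linarith) hk
      _ ≤ Real.exp (-1) := Real.one_sub_div_pow_le_exp_neg hD1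
      _ ≤ 1 / 2 := Real.exp_neg_one_lt_half.le
  calc wGe n (toReal f) D
      ≤ ∑ S with D ≤ #S, 2 * (fcoef n (toReal f) S ^ 2 * (1 - (1 - 1 / D : ℝ) ^ #S)) := by
        refine sum_le_sum fun S hS => ?_
        nlinarith [hhalf #S ((mem_filter_univ S).1 hS), sq_nonneg (fcoef n (toReal f) S)]
    _ ≤ ∑ S, 2 * (fcoef n (toReal f) S ^ 2 * (1 - (1 - 1 / D : ℝ) ^ #S)) := by
        refine sum_le_sum_of_subset_of_nonneg (subset_univ _) fun S _ _ => ?_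
        have := pow_le_one₀ (n := #S) (sub_nonneg.2 ht1) (by linarith)
        have := sub_nonneg.2 this
        positivity
    _ ≤ 2 * ((1 / D : ℝ) ^ p * hcExp n (fun x => (sens f x : ℝ) ^ p)) := by
        rw [← mul_sum]
        gcongr
        exact sum_fcoef_sq_mul_one_sub_pow_le f ht0 ht1 hp hp1
    _ = 2 * ((D : ℝ) ^ (-p) * hcExp n (fun x => (sens f x : ℝ) ^ p)) := by
        rw [one_div, Real.inv_rpow (Nat.cast_nonneg _), Real.rpow_neg (Nat.cast_nonneg _)]

end Tail

section Junta

variable {n : ℕ} {ε : ℝ} {j d : ℕ}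

lemma closeToJunta_of_one_le (hε : 1 ≤ ε) (j : ℕ) (f : (Fin n → Bool) → Bool) :
    closeToJunta ε j f := by
  refine ⟨fun _ => false, ⟨∅, by simp, fun _ _ _ => rfl⟩, ?_⟩
  calc hcExp n (fun x => if f x = false then 0 else 1)
      ≤ hcExp n (fun _ => 1) := hcExp_mono fun x => by split_ifs <;> norm_num
    _ ≤ ε := by rwa [hcExp_const]

lemma closeToJunta_of_hcExp_sub_sq_le {f : (Fin n → Bool) → Bool} {g : (Fin n → Bool) → ℝ}
    {J : Finset (Fin n)} (hJ : #J ≤ j) (hg : ∀ x y, (∀ i ∈ J, x i = y i) → g x = g y)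
    (hfg : hcExp n (fun x => (toReal f x - g x) ^ 2) ≤ ε / 4) : closeToJunta ε j f := by
  refine ⟨fun x => decide (1 / 2 ≤ g x), ⟨J, hJ, fun x y hxy => by simp only [hg x y hxy]⟩, ?_⟩
  calc hcExp n (fun x => if f x = decide (1 / 2 ≤ g x) then 0 else 1)
      ≤ hcExp n (fun x => 4 * (toReal f x - g x) ^ 2) := by
        refine hcExp_mono fun x => ?_
        -- Where the rounding of `g` differs from `f`, `|f - g| ≥ 1 / 2`.
        by_cases hgx : 1 / 2 ≤ g x <;> cases hf : f x <;> simp only [toReal, hf, hgx] <;> norm_num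
          <;> nlinarith
    _ ≤ ε := by
        rw [hcExp_const_mul]
        linarith

lemma closeToJunta_of_sum_fcoef_sq_le {f : (Fin n → Bool) → Bool} {J : Finset (Fin n)}
    (hJ : #J ≤ j) (hw : ∑ S with ¬S ⊆ J, fcoef n (toReal f) S ^ 2 ≤ ε / 4) :
    closeToJunta ε j f := by
  let g (x : Fin n → Bool) : ℝ := ∑ S ∈ J.powerset, fcoef n (toReal f) S * chi S x
  refine closeToJunta_of_hcExp_sub_sq_le (g := g) hJ (fun x y hxy => ?_) ?_
  · refine sum_congr rfl fun S hS => ?_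
    congr 1
    exact prod_congr rfl fun i hi => by rw [hxy i (mem_powerset.1 hS hi)]
  · have hcoef (S : Finset (Fin n)) : fcoef n (fun x => toReal f x - g x) S ^ 2 =
        if ¬S ⊆ J then fcoef n (toReal f) S ^ 2 else 0 := by
      rw [fcoef_sub, fcoef_sum_mul_chi]
      by_cases hS : S ⊆ J <;> simp [hS]
    rwa [hcExp_sq_eq_sum_fcoef_sq, sum_congr rfl fun S _ => hcoef S, ← sum_filter]

lemma sum_not_subset_le_add_wGe (g : (Fin n → Bool) → ℝ) (J : Finset (Fin n)) (d : ℕ) :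
    ∑ S with ¬S ⊆ J, fcoef n g S ^ 2 ≤
      ∑ S with ¬S ⊆ J ∧ #S ≤ d, fcoef n g S ^ 2 + wGe n g (d + 1) := by
  rw [← sum_filter_add_sum_filter_not _ fun S => #S ≤ d, filter_filter, filter_filter]
  gcongr
  refine sum_le_sum_of_subset_of_nonneg (fun S hS => ?_) fun S _ _ => sq_nonneg _
  simp only [mem_filter_univ, not_le] at hS ⊢
  exact hS.2

end Junta

section LowDegree

variable {n m : ℕ} {M p q τ : ℝ}

lemma sum_mem_fcoef_sq_le_wLe_derivOn (g : (Fin n → Bool) → ℝ) (i : Fin n) (d : ℕ) :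
    ∑ S with i ∈ S ∧ #S ≤ d, fcoef n g S ^ 2 ≤ 1 / 4 * wLe n (derivOn g i) d := by
  have hinj : Set.InjOn (fun S : Finset (Fin n) => S.erase i)
      ({S | i ∈ S ∧ #S ≤ d} : Finset (Finset (Fin n))) :=
    (erase_injOn' i).mono fun S hS => ((mem_filter_univ S).1 hS).1
  calc ∑ S with i ∈ S ∧ #S ≤ d, fcoef n g S ^ 2
      = ∑ S with i ∈ S ∧ #S ≤ d, 1 / 4 * fcoef n (derivOn g i) (S.erase i) ^ 2 := by
        refine sum_congr rfl fun S hS => ?_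
        rw [fcoef_derivOn, if_neg (notMem_erase i S), insert_erase ((mem_filter_univ S).1 hS).1]
        ring
    _ = 1 / 4 * ∑ T ∈ image (fun S => S.erase i) {S : Finset (Fin n) | i ∈ S ∧ #S ≤ d},
          fcoef n (derivOn g i) T ^ 2 := by
        rw [sum_image hinj, mul_sum]
    _ ≤ 1 / 4 * wLe n (derivOn g i) d := by
        refine mul_le_mul_of_nonneg_left (sum_le_sum_of_subset_of_nonneg
          (image_subset_iff.2 fun S hS => ?_) fun T _ _ => sq_nonneg _) (by norm_num)
        rw [mem_filter_univ] at hS ⊢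
        exact card_erase_le.trans hS.2

lemma sum_not_subset_fcoef_sq_le_sum_wLe_derivOn (g : (Fin n → Bool) → ℝ) (J : Finset (Fin n))
    (d : ℕ) :
    ∑ S with ¬S ⊆ J ∧ #S ≤ d, fcoef n g S ^ 2 ≤ 1 / 4 * ∑ i ∈ Jᶜ, wLe n (derivOn g i) d := by
  calc ∑ S with ¬S ⊆ J ∧ #S ≤ d, fcoef n g S ^ 2
      ≤ ∑ S with ¬S ⊆ J ∧ #S ≤ d, ∑ i ∈ Jᶜ, if i ∈ S ∧ #S ≤ d then fcoef n g S ^ 2 else 0 := by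
        refine sum_le_sum fun S hS => ?_
        rw [mem_filter_univ] at hS
        obtain ⟨i, hiS, hiJ⟩ := not_subset.1 hS.1
        refine le_of_eq_of_le ?_ (single_le_sum (fun i _ => ?_) (mem_compl.2 hiJ))
        · rw [if_pos ⟨hiS, hS.2⟩]
        · positivity
    _ ≤ ∑ S, ∑ i ∈ Jᶜ, if i ∈ S ∧ #S ≤ d then fcoef n g S ^ 2 else 0 :=
        sum_le_sum_of_subset_of_nonneg (subset_univ _) fun S _ _ => by positivity
    _ = ∑ i ∈ Jᶜ, ∑ S with i ∈ S ∧ #S ≤ d, fcoef n g S ^ 2 := by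
        rw [sum_comm]
        simp only [sum_filter]
    _ ≤ 1 / 4 * ∑ i ∈ Jᶜ, wLe n (derivOn g i) d := by
        rw [mul_sum]
        exact sum_le_sum fun i _ => sum_mem_fcoef_sq_le_wLe_derivOn g i d

/-- The derivative of `f` in direction `i`, restricted to the points of sensitivity `< M`. -/
def derivOnSensLT (f : (Fin n → Bool) → Bool) (M : ℝ) (i : Fin n) (x : Fin n → Bool) : ℝ :=
  if (sens f x : ℝ) < M then derivOn (toReal f) i x else 0

/-- The derivative of `f` in direction `i`, restricted to the points of sensitivity `≥ M`. -/
def derivOnSensGE (f : (Fin n → Bool) → Bool) (M : ℝ) (i : Fin n) (x : Fin n → Bool) : ℝ :=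
  if (sens f x : ℝ) < M then 0 else derivOn (toReal f) i x

lemma derivOn_eq_derivOnSensLT_add_derivOnSensGE (f : (Fin n → Bool) → Bool) (M : ℝ)
    (i : Fin n) (x : Fin n → Bool) :
    derivOn (toReal f) i x = derivOnSensLT f M i x + derivOnSensGE f M i x := by
  unfold derivOnSensLT derivOnSensGE
  split_ifs <;> simp

lemma derivOnSensLT_eq_zero_or_abs_eq_one (f : (Fin n → Bool) → Bool) (M : ℝ) (i : Fin n)
    (x : Fin n → Bool) : derivOnSensLT f M i x = 0 ∨ |derivOnSensLT f M i x| = 1 := by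
  have hsq := derivOn_toReal_sq f i x
  unfold derivOnSensLT
  split_ifs at hsq ⊢
  · exact .inr ((pow_eq_one_iff_of_nonneg (abs_nonneg _) two_ne_zero).1 ((sq_abs _).trans hsq))
  · exact .inl (pow_eq_zero_iff two_ne_zero |>.1 hsq)
  all_goals exact .inl rfl

lemma sum_hcExp_derivOnSensLT_sq_le (f : (Fin n → Bool) → Bool) (hM : 0 ≤ M) (hp : 0 ≤ p) :
    ∑ i, hcExp n (fun x => derivOnSensLT f M i x ^ 2) ≤
      M * hcExp n (fun x => (sens f x : ℝ) ^ p) := by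
  rw [← hcExp_sum, ← hcExp_const_mul]
  refine hcExp_mono fun x => ?_
  unfold derivOnSensLT
  split_ifs with hx
  · rw [sum_derivOn_toReal_sq, univ_inter, card_sensitiveCoords]
    rcases Nat.eq_zero_or_pos (sens f x) with h0 | h0
    · rw [h0, Nat.cast_zero]
      positivity
    · have hone : 1 ≤ (sens f x : ℝ) ^ p := Real.one_le_rpow (mod_cast h0) hp
      exact hx.le.trans (le_mul_of_one_le_right hM hone)
  · simp only [ne_eq, OfNat.ofNat_ne_zero, not_false_eq_true, zero_pow, sum_const_zero]
    positivity

lemma hcExp_sqrt_sum_derivOnSensGE_sq_rpow_le (f : (Fin n → Bool) → Bool) (hM : 0 < M)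
    (hq : 0 < q) (hqp : q / 2 ≤ p) (I : Finset (Fin n)) :
    hcExp n (fun x => √(∑ i ∈ I, derivOnSensGE f M i x ^ 2) ^ q) ≤
      M ^ (q / 2 - p) * hcExp n (fun x => (sens f x : ℝ) ^ p) := by
  rw [← hcExp_const_mul]
  refine hcExp_mono fun x => ?_
  unfold derivOnSensGE
  split_ifs with hx
  · simp only [ne_eq, OfNat.ofNat_ne_zero, not_false_eq_true, zero_pow, sum_const_zero,
      Real.sqrt_zero, Real.zero_rpow hq.ne']
    positivity
  · have hxM : M ≤ sens f x := not_lt.1 hx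
    calc √(∑ i ∈ I, derivOn (toReal f) i x ^ 2) ^ q ≤ √(sens f x : ℝ) ^ q := by
          rw [sum_derivOn_toReal_sq, ← card_sensitiveCoords]
          gcongr
          exact inter_subset_right
      _ = (sens f x : ℝ) ^ (q / 2 - p) * (sens f x : ℝ) ^ p := by
          rw [← Real.rpow_add (hM.trans_le hxM), Real.sqrt_eq_rpow,
            ← Real.rpow_mul (Nat.cast_nonneg _)]
          ring_nf
      _ ≤ M ^ (q / 2 - p) * (sens f x : ℝ) ^ p := by
          gcongr ?_ * _
          exact Real.rpow_le_rpow_of_nonpos hM hxM (by linarith)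

lemma sum_wLe_derivOnSensGE_le (f : (Fin n → Bool) → Bool)
    (hq : (2 ^ (m + 1) : ℝ).HolderConjugate q) (hM : 0 < M) (hqp : q / 2 ≤ p)
    (I : Finset (Fin n)) (d : ℕ) :
    ∑ i ∈ I, wLe n (derivOnSensGE f M i) d ≤
      3 ^ (m * d) * (M ^ (q / 2 - p) * hcExp n (fun x => (sens f x : ℝ) ^ p)) ^ (2 / q) := by
  have hq0 : 0 < q := hq.symm.pos
  have hnn : 0 ≤ hcExp n (fun x => √(∑ i ∈ I, derivOnSensGE f M i x ^ 2) ^ q) :=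
    hcExp_nonneg fun x => by positivity
  refine (sum_wLe_le_hcExp_sqrt_rpow hq I (derivOnSensGE f M) d).trans ?_
  gcongr
  exact hcExp_sqrt_sum_derivOnSensGE_sq_rpow_le f hM hq0 hqp I

lemma sum_wLe_derivOnSensLT_le (f : (Fin n → Bool) → Bool)
    (hq : (2 ^ (m + 1) : ℝ).HolderConjugate q) (hq' : q ≤ 4 / 3) (hM : 0 ≤ M) (hp : 0 ≤ p)
    {I : Finset (Fin n)} (hI : ∀ i ∈ I, hcExp n (fun x => derivOnSensLT f M i x ^ 2) ≤ τ) (d : ℕ) :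
    ∑ i ∈ I, wLe n (derivOnSensLT f M i) d ≤
      3 ^ (m * d) * (√τ * (M * hcExp n (fun x => (sens f x : ℝ) ^ p))) := by
  calc ∑ i ∈ I, wLe n (derivOnSensLT f M i) d
      ≤ ∑ i ∈ I, 3 ^ (m * d) * (√τ * hcExp n (fun x => derivOnSensLT f M i x ^ 2)) :=
        sum_le_sum fun i hi => wLe_le_of_forall_eq_zero_or_abs_eq_one hq hq'
          (derivOnSensLT_eq_zero_or_abs_eq_one f M i) (hI i hi) d
    _ ≤ ∑ i, 3 ^ (m * d) * (√τ * hcExp n (fun x => derivOnSensLT f M i x ^ 2)) :=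
        sum_le_sum_of_subset_of_nonneg (subset_univ I) fun i _ _ =>
          mul_nonneg (by positivity)
            (mul_nonneg (Real.sqrt_nonneg τ) (hcExp_nonneg fun x => sq_nonneg _))
    _ ≤ 3 ^ (m * d) * (√τ * (M * hcExp n (fun x => (sens f x : ℝ) ^ p))) := by
        rw [← mul_sum, ← mul_sum]
        gcongr
        exact sum_hcExp_derivOnSensLT_sq_le f hM hp

lemma exists_card_mul_le_and_forall_notMem_le {ι : Type*} [Fintype ι] {w : ι → ℝ}
    (hw : ∀ i, 0 ≤ w i) (τ : ℝ) : ∃ J : Finset ι, #J * τ ≤ ∑ i, w i ∧ ∀ i ∉ J, w i ≤ τ := by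
  refine ⟨({i | τ ≤ w i} : Finset ι), ?_, fun i hi => ?_⟩
  · rw [← nsmul_eq_mul]
    exact (card_nsmul_le_sum _ w _ fun i hi => (mem_filter_univ i).1 hi).trans
      (sum_le_sum_of_subset_of_nonneg (subset_univ _) fun i _ _ => hw i)
  · rw [mem_filter_univ, not_le] at hi
    exact hi.le

lemma exists_card_mul_le_and_sum_fcoef_sq_le (f : (Fin n → Bool) → Bool)
    (hq : (2 ^ (m + 1) : ℝ).HolderConjugate q) (hq' : q ≤ 4 / 3) (hM : 0 < M) (hqp : q / 2 ≤ p)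
    (τ : ℝ) (d : ℕ) :
    ∃ J : Finset (Fin n), #J * τ ≤ M * hcExp n (fun x => (sens f x : ℝ) ^ p) ∧
      ∑ S with ¬S ⊆ J ∧ #S ≤ d, fcoef n (toReal f) S ^ 2 ≤
        3 ^ (m * d) * ((M ^ (q / 2 - p) * hcExp n (fun x => (sens f x : ℝ) ^ p)) ^ (2 / q) +
          √τ * (M * hcExp n (fun x => (sens f x : ℝ) ^ p))) := by
  have hp : 0 ≤ p := by linarith [hq.symm.pos]
  obtain ⟨J, hJ, hJc⟩ := exists_card_mul_le_and_forall_notMem_le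
    (fun i => hcExp_nonneg fun x => sq_nonneg (derivOnSensLT f M i x)) τ
  have hlarge := sum_wLe_derivOnSensGE_le f hq hM hqp Jᶜ d
  have hsmall := sum_wLe_derivOnSensLT_le f hq hq' hM.le hp
    (fun i hi => hJc i (mem_compl.1 hi)) d
  refine ⟨J, hJ.trans (sum_hcExp_derivOnSensLT_sq_le f hM.le hp), ?_⟩
  have hnn (h : Fin n → (Fin n → Bool) → ℝ) : 0 ≤ ∑ i ∈ Jᶜ, wLe n (h i) d :=
    sum_nonneg fun i _ => wLe_nonneg (h i) d
  calc ∑ S with ¬S ⊆ J ∧ #S ≤ d, fcoef n (toReal f) S ^ 2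
      ≤ 1 / 4 * ∑ i ∈ Jᶜ, wLe n (derivOn (toReal f) i) d :=
        sum_not_subset_fcoef_sq_le_sum_wLe_derivOn _ J d
    _ ≤ 1 / 4 * ∑ i ∈ Jᶜ, 2 * (wLe n (derivOnSensLT f M i) d + wLe n (derivOnSensGE f M i) d) := by
        gcongr with i
        rw [funext (derivOn_eq_derivOnSensLT_add_derivOnSensGE f M i)]
        exact wLe_add_le _ _ d
    _ ≤ ∑ i ∈ Jᶜ, wLe n (derivOnSensGE f M i) d + ∑ i ∈ Jᶜ, wLe n (derivOnSensLT f M i) d := by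
        rw [← mul_sum, sum_add_distrib]
        linarith [hnn (derivOnSensGE f M), hnn (derivOnSensLT f M)]
    _ ≤ 3 ^ (m * d) * ((M ^ (q / 2 - p) * hcExp n (fun x => (sens f x : ℝ) ^ p)) ^ (2 / q) +
          √τ * (M * hcExp n (fun x => (sens f x : ℝ) ^ p))) := by
        rw [mul_add]
        exact add_le_add hlarge hsmall

lemma exists_holderConjugate_two_pow_le {η : ℝ} (hη : 0 < η) :
    ∃ (m : ℕ) (q : ℝ), (2 ^ (m + 1) : ℝ).HolderConjugate q ∧ q ≤ 1 + η := by
  obtain ⟨m, hm⟩ := pow_unbounded_of_one_lt (1 + 1 / η) one_lt_two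
  have hk : 1 + 1 / η < (2 : ℝ) ^ (m + 1) :=
    hm.trans_le (pow_le_pow_right₀ one_le_two m.le_succ)
  have hk1 : (1 : ℝ) < 2 ^ (m + 1) := one_lt_pow₀ one_lt_two m.succ_ne_zero
  refine ⟨m, _, .conjExponent hk1, ?_⟩
  have hinv : 1 < η * (2 ^ (m + 1) - 1) := by
    rw [← div_lt_iff₀' hη]
    linarith
  rw [Real.conjExponent, div_le_iff₀ (by linarith)]
  linarith

end LowDegree

section FourierWeight

variable {n m d : ℕ} {δ ε κ p q : ℝ}

lemma rpow_pow_rpow_le_inv_pow {K : ℝ} (hδ : 0 < δ) (hK : 1 ≤ K) (hqp : q / 2 + δ / 2 ≤ p)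
    (d : ℕ) : ((K ^ (2 / δ)) ^ d) ^ (q / 2 - p) ≤ (K ^ d)⁻¹ := by
  have hK0 : 0 ≤ K := by linarith
  calc ((K ^ (2 / δ)) ^ d) ^ (q / 2 - p)
      ≤ ((K ^ (2 / δ)) ^ d) ^ (-(δ / 2)) :=
        Real.rpow_le_rpow_of_exponent_le (one_le_pow₀ (Real.one_le_rpow hK (by positivity)))
          (by linarith)
    _ = (K ^ d)⁻¹ := by
        rw [← Real.rpow_natCast, ← Real.rpow_mul hK0, ← Real.rpow_mul hK0,
          show 2 / δ * d * -(δ / 2) = -d by field_simp, Real.rpow_neg hK0, Real.rpow_natCast]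

lemma rpow_pow_rpow_mul_rpow_le {A : ℝ} (hδ : 0 < δ) (hκ : 1 ≤ κ) (hq : 0 < q) (hq' : q ≤ 2)
    (hqp : q / 2 + δ / 2 ≤ p) (hε : ε ≤ 1) (hA0 : 0 ≤ A) (hA : A ≤ ε * 2 ^ d) :
    ((((2 * κ) ^ (2 / δ)) ^ d) ^ (q / 2 - p) * A) ^ (2 / q) ≤ ε * (κ ^ d)⁻¹ := by
  have hle : (((2 * κ) ^ (2 / δ)) ^ d) ^ (q / 2 - p) * A ≤ ε * (κ ^ d)⁻¹ := by
    calc (((2 * κ) ^ (2 / δ)) ^ d) ^ (q / 2 - p) * A ≤ ((2 * κ) ^ d)⁻¹ * (ε * 2 ^ d) := by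
          gcongr
          exact rpow_pow_rpow_le_inv_pow hδ (by linarith) hqp d
      _ = ε * (κ ^ d)⁻¹ := by
          rw [mul_pow]
          field_simp
  have hone : (((2 * κ) ^ (2 / δ)) ^ d) ^ (q / 2 - p) * A ≤ 1 :=
    hle.trans (mul_le_one₀ hε (by positivity) (inv_le_one_of_one_le₀ (one_le_pow₀ hκ)))
  exact (Real.rpow_le_self_of_le_one (by positivity) hone ((one_le_div hq).2 hq')).trans hle

lemma exists_card_le_pow_and_sum_fcoef_sq_le_of_holderConjugate (f : (Fin n → Bool) → Bool)
    (hq : (2 ^ (m + 1) : ℝ).HolderConjugate q) (hq' : q ≤ 4 / 3) (hδ : 0 < δ)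
    (hqp : q / 2 + δ / 2 ≤ p) (hκ : 1 ≤ κ) (hε : ε ≤ 1)
    (hA : hcExp n (fun x => (sens f x : ℝ) ^ p) ≤ ε * 2 ^ d) :
    ∃ J : Finset (Fin n), #J ≤ (8 * ((2 * κ) ^ (2 / δ)) ^ 3 * κ ^ 2) ^ d ∧
      ∑ S with ¬S ⊆ J ∧ #S ≤ d, fcoef n (toReal f) S ^ 2 ≤
        3 ^ (m * d) * (2 * ε * (κ ^ d)⁻¹) := by
  set A : ℝ := hcExp n (fun x => (sens f x : ℝ) ^ p)
  set E : ℝ := (2 * κ) ^ (2 / δ)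
  have hE0 : 0 < E := by positivity
  have hA0 : 0 ≤ A := hcExp_sens_rpow_nonneg f p
  have hsmall : √(((2 * E * κ) ^ d)⁻¹ ^ 2) * (E ^ d * A) ≤ ε * (κ ^ d)⁻¹ := by
    rw [Real.sqrt_sq (by positivity)]
    calc ((2 * E * κ) ^ d)⁻¹ * (E ^ d * A)
        ≤ ((2 * E * κ) ^ d)⁻¹ * (E ^ d * (ε * 2 ^ d)) := by gcongr
      _ = ε * (κ ^ d)⁻¹ := by
        rw [mul_pow, mul_pow]
        field_simp
  -- With threshold `M = E ^ d` the large part gains `M ^ (q / 2 - p) ≤ (2 * κ) ^ (-d)`; the cutoff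
  -- for the influences is chosen so that the small part is at most `ε * κ ^ (-d)` as well.
  obtain ⟨J, hJ, hsum⟩ := exists_card_mul_le_and_sum_fcoef_sq_le f hq hq' (p := p)
    (pow_pos hE0 d) (by linarith) (((2 * E * κ) ^ d)⁻¹ ^ 2) d
  refine ⟨J, ?_, hsum.trans ?_⟩
  · have hA2 : A ≤ 2 ^ d := hA.trans (mul_le_of_le_one_left (by positivity) hε)
    calc (#J : ℝ) = #J * ((2 * E * κ) ^ d)⁻¹ ^ 2 * ((2 * E * κ) ^ d) ^ 2 := by field_simp
      _ ≤ E ^ d * A * ((2 * E * κ) ^ d) ^ 2 := mul_le_mul_of_nonneg_right hJ (sq_nonneg _)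
      _ ≤ E ^ d * 2 ^ d * ((2 * E * κ) ^ d) ^ 2 := by gcongr
      _ = (8 * E ^ 3 * κ ^ 2) ^ d := by
        rw [← mul_pow, ← pow_mul, mul_comm d, pow_mul, ← mul_pow]
        ring
  · gcongr
    linarith [rpow_pow_rpow_mul_rpow_le hδ hκ hq.symm.pos (by linarith) hqp hε hA0 hA]

lemma exists_forall_exists_card_le_pow_and_sum_fcoef_sq_le (hδ : 0 < δ) :
    ∃ Z : ℝ, 1 < Z ∧ ∀ {n d : ℕ} (f : (Fin n → Bool) → Bool) {p ε : ℝ}, 1 / 2 + δ ≤ p → ε ≤ 1 →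
      hcExp n (fun x => (sens f x : ℝ) ^ p) ≤ ε * 2 ^ d →
        ∃ J : Finset (Fin n), #J ≤ Z ^ d ∧
          ∑ S with ¬S ⊆ J ∧ #S ≤ d, fcoef n (toReal f) S ^ 2 ≤ 2 * ε * (1 / 16) ^ d := by
  obtain ⟨m, q, hq, hqη⟩ := exists_holderConjugate_two_pow_le (lt_min hδ (one_div_pos.2 three_pos))
  have hqδ : q ≤ 1 + δ := hqη.trans (add_le_add_right (min_le_left _ _) _)
  have hq' : q ≤ 4 / 3 := by linarith [min_le_right δ (1 / 3)]
  -- `κ = 16 * 3 ^ m` absorbs the hypercontractive constant `3 ^ (m * d)`.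
  have hκ : (1 : ℝ) ≤ 16 * 3 ^ m := by
    linarith [one_le_pow₀ (M₀ := ℝ) (n := m) (a := 3) (by norm_num)]
  have hE : (1 : ℝ) ≤ (2 * (16 * 3 ^ m)) ^ (2 / δ) :=
    Real.one_le_rpow (by linarith) (by positivity)
  refine ⟨8 * ((2 * (16 * 3 ^ m)) ^ (2 / δ)) ^ 3 * (16 * 3 ^ m) ^ 2, ?_, ?_⟩
  · nlinarith [one_le_pow₀ hE (n := 3), one_le_pow₀ hκ (n := 2)]
  · intro n d f p ε hp hε hA
    obtain ⟨J, hJ, hsum⟩ := exists_card_le_pow_and_sum_fcoef_sq_le_of_holderConjugate f hq hq' hδ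
      (by linarith) hκ hε hA
    refine ⟨J, hJ, hsum.trans_eq ?_⟩
    rw [mul_pow, pow_mul, div_pow, one_pow]
    field_simp

lemma sum_card_le_fcoef_sq_le_of_le_mul_pow {g : (Fin n → Bool) → ℝ} {J : Finset (Fin n)}
    (hε : 0 ≤ ε)
    (hsum : ∑ S with ¬S ⊆ J ∧ #S ≤ d, fcoef n g S ^ 2 ≤ 2 * ε * (1 / 16) ^ d) :
    ∑ S with ¬S ⊆ J ∧ #S ≤ d, fcoef n g S ^ 2 ≤ ε / 8 := by
  rcases Nat.eq_zero_or_pos d with rfl | hd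
  · rw [sum_eq_zero]
    · positivity
    · intro S hS
      obtain ⟨hSJ, hS0⟩ := (mem_filter_univ S).1 hS
      exact absurd (card_eq_zero.1 (Nat.le_zero.1 hS0) ▸ empty_subset J) hSJ
  · have hpow : (1 / 16 : ℝ) ^ d ≤ 1 / 16 :=
      pow_le_of_le_one (by norm_num) (by norm_num) hd.ne'
    nlinarith

end FourierWeight

section Parameters

lemma exists_nat_le_rpow_and_le_two_pow {X p : ℝ} (hX : 0 < X) (hp : 1 / 2 ≤ p) (hp1 : p ≤ 1) :
    ∃ d : ℕ, 16 * X ≤ ((d + 1 : ℕ) : ℝ) ^ p ∧ X ≤ 2 ^ d ∧ d ≤ 256 * X ^ (1 / p) := by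
  have hp0 : 0 < p := by linarith
  let Y : ℝ := (16 * X) ^ (1 / p)
  have hY0 : 0 ≤ Y := by positivity
  have hlarge : 16 * X ≤ ((⌊Y⌋₊ + 1 : ℕ) : ℝ) ^ p := by
    rw [← Real.rpow_inv_le_iff_of_pos (by positivity) (by positivity) hp0, ← one_div]
    push_cast
    exact (Nat.lt_floor_add_one Y).le
  refine ⟨⌊Y⌋₊, hlarge, ?_, (Nat.floor_le hY0).trans ?_⟩
  · have hlt : (⌊Y⌋₊ + 1 : ℕ) ≤ (2 : ℝ) ^ (⌊Y⌋₊ + 1) := mod_cast Nat.lt_two_pow_self.le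
    have hself : ((⌊Y⌋₊ + 1 : ℕ) : ℝ) ^ p ≤ (⌊Y⌋₊ + 1 : ℕ) :=
      Real.rpow_le_self_of_one_le (mod_cast Nat.succ_pos _) hp1
    rw [pow_succ] at hlt
    linarith
  · calc Y = 16 ^ (1 / p) * X ^ (1 / p) := Real.mul_rpow (by norm_num) hX.le
      _ ≤ 256 * X ^ (1 / p) := by
        gcongr
        calc (16 : ℝ) ^ (1 / p) ≤ 16 ^ (2 : ℝ) :=
              Real.rpow_le_rpow_of_exponent_le (by norm_num) (by rw [div_le_iff₀ hp0]; linarith)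
          _ = 256 := by norm_num

lemma pow_le_rpow_logb_mul {b Z r : ℝ} {d : ℕ} (hb : 1 < b) (hZ : 1 < Z) (hd : d ≤ r) :
    Z ^ d ≤ b ^ (Real.logb b Z * r) := by
  have hb0 : 0 < b := by linarith
  have hlog : 0 < Real.logb b Z := Real.logb_pos hb hZ
  calc Z ^ d = b ^ (Real.logb b Z * d) := by
        rw [Real.rpow_mul hb0.le, Real.rpow_logb hb0 hb.ne' (by linarith), Real.rpow_natCast]
    _ ≤ b ^ (Real.logb b Z * r) := by
        gcongr
        exact hb.le

lemma wGe_toReal_le_div_eight {n D : ℕ} {f : (Fin n → Bool) → Bool} {ε A p : ℝ} (hε : 0 < ε)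
    (hp : 1 / 2 ≤ p) (hp1 : p ≤ 1) (hA : hcExp n (fun x => (sens f x : ℝ) ^ p) ≤ A)
    (hD0 : D ≠ 0) (hD : 16 * (A / ε) ≤ (D : ℝ) ^ p) : wGe n (toReal f) D ≤ ε / 8 := by
  have hDp : 0 < (D : ℝ) ^ p := by positivity
  refine (wGe_toReal_le f hD0 hp hp1).trans ?_
  rw [Real.rpow_neg (Nat.cast_nonneg D), inv_mul_eq_div, ← mul_div_assoc, div_le_iff₀ hDp]
  calc 2 * hcExp n (fun x => (sens f x : ℝ) ^ p) ≤ 2 * A := by gcongr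
    _ = ε / 8 * (16 * (A / ε)) := by field_simp; ring
    _ ≤ ε / 8 * (D : ℝ) ^ p := by gcongr

end Parameters

theorem strengthened_friedgut (δ : ℝ) (hδ : 0 < δ) :
    ∃ C : ℝ, 0 < C ∧
      ∀ (ε A p : ℝ), 0 < ε → 0 < A → 1 / 2 + δ ≤ p → p ≤ 1 →
        ∀ (n : ℕ) (f : (Fin n → Bool) → Bool),
          hcExp n (fun x => (sens f x : ℝ) ^ p) ≤ A →
          closeToJunta ε ⌊(2 : ℝ) ^ (C * (A / ε) ^ (1 / p))⌋₊ f := by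
  obtain ⟨Z, hZ, hjunta⟩ := exists_forall_exists_card_le_pow_and_sum_fcoef_sq_le hδ
  refine ⟨Real.logb 2 Z * 256, mul_pos (Real.logb_pos one_lt_two hZ) (by norm_num), ?_⟩
  intro ε A p hε hA hp hp1 n f hf
  rcases le_total 1 ε with hε1 | hε1
  · exact closeToJunta_of_one_le hε1 _ f
  have hp' : 1 / 2 ≤ p := by linarith
  obtain ⟨d, hdA, hd2, hd⟩ := exists_nat_le_rpow_and_le_two_pow (div_pos hA hε) hp' hp1
  obtain ⟨J, hJ, hlow⟩ := hjunta f hp hε1 (hf.trans ((div_le_iff₀' hε).1 hd2))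
  have htail : wGe n (toReal f) (d + 1) ≤ ε / 8 :=
    wGe_toReal_le_div_eight hε hp' hp1 hf d.succ_ne_zero hdA
  have hlow' := sum_card_le_fcoef_sq_le_of_le_mul_pow hε.le hlow
  refine closeToJunta_of_sum_fcoef_sq_le (J := J) (Nat.le_floor ?_) ?_
  · rw [mul_assoc]
    exact hJ.trans (pow_le_rpow_logb_mul one_lt_two hZ hd)
  · linarith [sum_not_subset_le_add_wGe (toReal f) J d]

end
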